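/- Let f, g : I → ℝ be strictly monotone and differentiable with f'(x) ≠ 0 and g'(x) ≠ 0 for all x ∈ I, and suppose f and g have the same monotonicity (both strictly increasing or both strictly decreasing). Then A^[f] ≤ A^[g] if and only if the function x ↦ f'(x)/g'(x) is non-increasing on I. -/

import Mathlib

/-!
For increasing generators, `A^[f] ≤ A^[g]` says that `f ∘ g⁻¹` is concave, equivalently that
`g ∘ f⁻¹` is convex, and `f' / g'` is the derivative of `f ∘ g⁻¹` at `g x`. The argument is carried
out on `I` itself, without differentiating inverse functions.

If `f' / g'` is non-increasing and `m = A^[f](a)`, then with `c = f' m / g' m` the function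
`f - c * g` is maximal at `m` (`sub_ratio_mul_le`); averaging this over the `aᵢ` gives
`g m ≤ g (A^[g](a))`.

Conversely, the two-variable means give midpoint convexity of `g ∘ f⁻¹`
(`midpoint_le_of_qamLE`), which with continuity yields the chord inequality on every `[x, y]`
(`chord_le_of_qamLE`). Differentiating it at the two endpoints places the chord slope
`(f y - f x) / (g y - g x)` between `f' y / g' y` and `f' x / g' x`.

The decreasing case follows on replacing `f, g` by `-f, -g`, which changes neither the means
nor the ratio.
-/

open Set Function Filter

/-- The quasi-arithmetic mean generated by `f` on the interval `I`,
applied to a vector `a ∈ Iⁿ`: `f⁻¹((f a₁ + ⋯ + f aₙ)/n)`, where the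
inverse of `f` is taken on `I`. -/
noncomputable def qam (I : Set ℝ) (f : ℝ → ℝ) {n : ℕ} (a : Fin n → ℝ) : ℝ :=
  Function.invFunOn f I ((∑ i, f (a i)) / n)

/-- The natural (pointwise) partial order on quasi-arithmetic means:
`A^[f] ≤ A^[g]` iff `A^[f](a) ≤ A^[g](a)` for every `n ≥ 1` and every `a ∈ Iⁿ`. -/
def qamLE (I : Set ℝ) (f g : ℝ → ℝ) : Prop :=
  ∀ n : ℕ, 1 ≤ n → ∀ a : Fin n → ℝ, (∀ i, a i ∈ I) → qam I f a ≤ qam I g a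

/-- `A^[f] = A^[g]` : equality of the two quasi-arithmetic means as means. -/
def qamEQ (I : Set ℝ) (f g : ℝ → ℝ) : Prop :=
  ∀ n : ℕ, 1 ≤ n → ∀ a : Fin n → ℝ, (∀ i, a i ∈ I) → qam I f a = qam I g a

/-- `f` is strictly monotone on `I` (strictly increasing or strictly decreasing). -/
def StrictMonoOrAntiOn (f : ℝ → ℝ) (I : Set ℝ) : Prop :=
  StrictMonoOn f I ∨ StrictAntiOn f I

/-- On an interval, a continuous injective generator `f` attains the average of its values, so the
inverse in the definition of `qam` is a genuine one. -/
lemma qam_spec {I : Set ℝ} (hI : I.OrdConnected) {f : ℝ → ℝ} (hf : ContinuousOn f I)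
    {n : ℕ} (hn : 1 ≤ n) (a : Fin n → ℝ) (ha : ∀ i, a i ∈ I) :
    qam I f a ∈ I ∧ f (qam I f a) = (∑ i, f (a i)) / n := by
  have hn0 : (n : ℝ) ≠ 0 := by positivity
  have hconv : Convex ℝ (f '' I) :=
    (hI.isPreconnected.image f hf).ordConnected.convex
  have hmem : (∑ i, f (a i)) / n ∈ f '' I := by
    have h := hconv.sum_mem (t := Finset.univ) (w := fun _ : Fin n => (1 / n : ℝ))
      (z := fun i => f (a i)) (fun _ _ => by positivity) (by simp [hn0])
      (fun i _ => mem_image_of_mem f (ha i))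
    convert h using 1
    simp only [smul_eq_mul]
    rw [← Finset.mul_sum]
    ring
  exact ⟨invFunOn_mem hmem, invFunOn_eq hmem⟩

lemma qam_neg {I : Set ℝ} (hI : I.OrdConnected) {f : ℝ → ℝ} (hf : ContinuousOn f I)
    (hinj : InjOn f I) {n : ℕ} (hn : 1 ≤ n) (a : Fin n → ℝ) (ha : ∀ i, a i ∈ I) :
    qam I (fun x => -f x) a = qam I f a := by
  obtain ⟨h1, h2⟩ := qam_spec hI hf hn a ha
  obtain ⟨h3, h4⟩ := qam_spec (f := fun x => -f x) hI hf.neg hn a ha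
  refine hinj h3 h1 ?_
  have h5 : (∑ i, -f (a i)) / (n : ℝ) = -((∑ i, f (a i)) / n) := by
    rw [Finset.sum_neg_distrib, neg_div]
  linarith

lemma deriv_pos_of_strictMonoOn {I : Set ℝ} (hI : I.OrdConnected)
    (hInontriv : ∃ x ∈ I, ∃ y ∈ I, x < y) {f f' : ℝ → ℝ}
    (hfd : ∀ x ∈ I, HasDerivWithinAt f (f' x) I x)
    (hf'0 : ∀ x ∈ I, f' x ≠ 0) (hf : StrictMonoOn f I) : ∀ x ∈ I, 0 < f' x := by
  intro x hx
  obtain ⟨u, hu, v, hv, huv⟩ := hInontriv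
  have hint : (interior I).Nonempty := by
    obtain ⟨w, hw⟩ := nonempty_Ioo.2 huv
    exact ⟨w, interior_mono (hI.out hu hv) (by rwa [interior_Icc])⟩
  have hud := uniqueDiffOn_convex hI.convex hint
  have h := hf.monotoneOn.derivWithin_nonneg (x := x)
  rw [(hfd x hx).derivWithin (hud x hx)] at h
  exact lt_of_le_of_ne h (hf'0 x hx).symm

/-- The tangent-line inequality behind concavity of `f ∘ g⁻¹`, written without the inverse: with
`c = f' m / g' m`, the derivative `g' * (f' / g' - c)` of `f - c * g` is nonnegative to the left of
`m` and nonpositive to its right. -/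
lemma sub_ratio_mul_le {I : Set ℝ} (hI : I.OrdConnected) {f g f' g' : ℝ → ℝ}
    (hfd : ∀ x ∈ I, HasDerivWithinAt f (f' x) I x)
    (hgd : ∀ x ∈ I, HasDerivWithinAt g (g' x) I x)
    (hg' : ∀ x ∈ I, 0 < g' x) (hanti : AntitoneOn (fun x => f' x / g' x) I)
    {m x : ℝ} (hm : m ∈ I) (hx : x ∈ I) :
    f x - f' m / g' m * g x ≤ f m - f' m / g' m * g m := by
  set c := f' m / g' m with hc
  have hd : ∀ z ∈ I, HasDerivWithinAt (fun z => f z - c * g z) (f' z - c * g' z) I z :=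
    fun z hz => (hfd z hz).sub ((hgd z hz).const_mul c)
  rcases le_total x m with hxm | hxm
  · have hsub : Icc x m ⊆ I := hI.out hx hm
    refine monotoneOn_of_hasDerivWithinAt_nonneg (convex_Icc x m)
      (f' := fun z => f' z - c * g' z)
      (fun z hz => ((hd z (hsub hz)).continuousWithinAt).mono hsub)
      (fun z hz => (hd z (hsub (interior_subset hz))).mono (interior_subset.trans hsub))
      ?_ (left_mem_Icc.2 hxm) (right_mem_Icc.2 hxm) hxm
    intro z hz
    have hz' := interior_subset hz
    have hzI := hsub hz'
    have h : c ≤ f' z / g' z := hanti hzI hm hz'.2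
    rw [le_div_iff₀ (hg' z hzI)] at h
    linarith
  · have hsub : Icc m x ⊆ I := hI.out hm hx
    refine antitoneOn_of_hasDerivWithinAt_nonpos (convex_Icc m x)
      (f' := fun z => f' z - c * g' z)
      (fun z hz => ((hd z (hsub hz)).continuousWithinAt).mono hsub)
      (fun z hz => (hd z (hsub (interior_subset hz))).mono (interior_subset.trans hsub))
      ?_ (left_mem_Icc.2 hxm) (right_mem_Icc.2 hxm) hxm
    intro z hz
    have hz' := interior_subset hz
    have hzI := hsub hz'
    have h : f' z / g' z ≤ c := hanti hm hzI hz'.1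
    rw [div_le_iff₀ (hg' z hzI)] at h
    linarith

/-- The two-variable case of the comparison: midpoint convexity of `g ∘ f⁻¹`. -/
lemma midpoint_le_of_qamLE {I : Set ℝ} (hI : I.OrdConnected) {f g : ℝ → ℝ}
    (hfc : ContinuousOn f I) (hgc : ContinuousOn g I)
    (hf : StrictMonoOn f I) (hg : StrictMonoOn g I) (hle : qamLE I f g)
    {u v z : ℝ} (hu : u ∈ I) (hv : v ∈ I) (hz : z ∈ I) (h : f u + f v = 2 * f z) :
    2 * g z ≤ g u + g v := by
  have ha : ∀ i, (![u, v] : Fin 2 → ℝ) i ∈ I := by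
    intro i; fin_cases i <;> simpa
  obtain ⟨h1, h2⟩ := qam_spec hI hfc one_le_two ![u, v] ha
  obtain ⟨h3, h4⟩ := qam_spec hI hgc one_le_two ![u, v] ha
  have h5 := hle 2 one_le_two ![u, v] ha
  simp only [Fin.sum_univ_two, Matrix.cons_val_zero, Matrix.cons_val_one, Nat.cast_ofNat] at h2 h4
  have h6 : qam I f ![u, v] = z := hf.injOn h1 hz (by rw [h2, h]; ring)
  rw [h6] at h5
  have h7 := hg.monotoneOn hz h3 h5
  rw [h4] at h7
  linarith

/-- The chord inequality for `g ∘ f⁻¹`. The function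
`ψ = (f y - f x) * g - (g y - g x) * f` takes equal values at `x` and `y`; at an interior maximum
`z` with `ψ z > ψ x`, reflecting the endpoint nearer in the `f`-scale through `z` contradicts the
midpoint inequality. -/
lemma chord_le_of_qamLE {I : Set ℝ} (hI : I.OrdConnected) {f g : ℝ → ℝ}
    (hfc : ContinuousOn f I) (hgc : ContinuousOn g I)
    (hf : StrictMonoOn f I) (hg : StrictMonoOn g I) (hle : qamLE I f g)
    {x y w : ℝ} (hx : x ∈ I) (hy : y ∈ I) (hw : w ∈ Icc x y) :
    (f y - f x) * g w - (g y - g x) * f w ≤ (f y - f x) * g x - (g y - g x) * f x := by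
  have hxy : x ≤ y := hw.1.trans hw.2
  have hsub : Icc x y ⊆ I := hI.out hx hy
  have hfI : ContinuousOn f (Icc x y) := hfc.mono hsub
  have hΔ : 0 ≤ f y - f x := sub_nonneg.2 (hf.monotoneOn hx hy hxy)
  obtain ⟨z, hz, hmax⟩ := isCompact_Icc.exists_isMaxOn (nonempty_Icc.2 hxy)
    (f := fun t => (f y - f x) * g t - (g y - g x) * f t)
    ((continuousOn_const.mul (hgc.mono hsub)).sub (continuousOn_const.mul hfI))
  have hmax' : ∀ t ∈ Icc x y, (f y - f x) * g t - (g y - g x) * f t ≤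
      (f y - f x) * g z - (g y - g x) * f z := fun t ht => hmax ht
  have hfxz := hf.monotoneOn hx (hsub hz) hz.1
  have hfzy := hf.monotoneOn (hsub hz) hy hz.2
  refine (hmax' w hw).trans ?_
  rcases le_total (f z - f x) (f y - f z) with h | h
  · obtain ⟨v, hv, hfv⟩ := intermediate_value_Icc hxy hfI
      (show 2 * f z - f x ∈ Icc (f x) (f y) from ⟨by linarith, by linarith⟩)
    have hmid := midpoint_le_of_qamLE hI hfc hgc hf hg hle hx (hsub hv) (hsub hz)
      (by rw [hfv]; ring)
    have h1 := mul_le_mul_of_nonneg_left hmid hΔ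
    have h2 := hmax' v hv
    rw [hfv] at h2
    linarith
  · obtain ⟨v, hv, hfv⟩ := intermediate_value_Icc hxy hfI
      (show 2 * f z - f y ∈ Icc (f x) (f y) from ⟨by linarith, by linarith⟩)
    have hmid := midpoint_le_of_qamLE hI hfc hgc hf hg hle (hsub hv) hy (hsub hz)
      (by rw [hfv]; ring)
    have h1 := mul_le_mul_of_nonneg_left hmid hΔ
    have h2 := hmax' v hv
    rw [hfv] at h2
    linarith

lemma deriv_nonpos_of_max_left {ψ : ℝ → ℝ} {d x y : ℝ} (hxy : x < y)
    (hd : HasDerivWithinAt ψ d (Icc x y) x) (hmax : ∀ w ∈ Icc x y, ψ w ≤ ψ x) : d ≤ 0 := by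
  have hd' := (hd.mono Ioc_subset_Icc_self)
  rw [hasDerivWithinAt_iff_tendsto_slope' (by simp)] at hd'
  have : (nhdsWithin x (Ioc x y)).NeBot := by
    rw [nhdsWithin_Ioc_eq_nhdsGT hxy]; infer_instance
  refine le_of_tendsto hd' ?_
  filter_upwards [self_mem_nhdsWithin] with w hw
  rw [slope_def_field]
  exact div_nonpos_of_nonpos_of_nonneg (sub_nonpos.2 (hmax w (Ioc_subset_Icc_self hw)))
    (sub_nonneg.2 hw.1.le)

lemma deriv_nonneg_of_max_right {ψ : ℝ → ℝ} {d x y : ℝ} (hxy : x < y)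
    (hd : HasDerivWithinAt ψ d (Icc x y) y) (hmax : ∀ w ∈ Icc x y, ψ w ≤ ψ y) : 0 ≤ d := by
  have hd' := (hd.mono Ico_subset_Icc_self)
  rw [hasDerivWithinAt_iff_tendsto_slope' (by simp)] at hd'
  have : (nhdsWithin y (Ico x y)).NeBot := by
    rw [nhdsWithin_Ico_eq_nhdsLT hxy]; infer_instance
  refine ge_of_tendsto hd' ?_
  filter_upwards [self_mem_nhdsWithin] with w hw
  rw [slope_def_field]
  exact div_nonneg_of_nonpos (sub_nonpos.2 (hmax w (Ico_subset_Icc_self hw)))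
    (sub_nonpos.2 hw.2.le)

lemma qamLE_iff_of_strictMonoOn {I : Set ℝ} (hI : I.OrdConnected)
    (hInontriv : ∃ x ∈ I, ∃ y ∈ I, x < y) {f g f' g' : ℝ → ℝ}
    (hfd : ∀ x ∈ I, HasDerivWithinAt f (f' x) I x)
    (hgd : ∀ x ∈ I, HasDerivWithinAt g (g' x) I x)
    (hf'0 : ∀ x ∈ I, f' x ≠ 0) (hg'0 : ∀ x ∈ I, g' x ≠ 0)
    (hf : StrictMonoOn f I) (hg : StrictMonoOn g I) :
    qamLE I f g ↔ AntitoneOn (fun x => f' x / g' x) I := by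
  have hfc : ContinuousOn f I := fun x hx => (hfd x hx).continuousWithinAt
  have hgc : ContinuousOn g I := fun x hx => (hgd x hx).continuousWithinAt
  have hf' := deriv_pos_of_strictMonoOn hI hInontriv hfd hf'0 hf
  have hg' := deriv_pos_of_strictMonoOn hI hInontriv hgd hg'0 hg
  constructor
  · intro hle x hx y hy hxy
    rcases hxy.eq_or_lt with rfl | hlt
    · exact le_rfl
    have hsub : Icc x y ⊆ I := hI.out hx hy
    have hchord := fun w hw => chord_le_of_qamLE hI hfc hgc hf hg hle (w := w) hx hy hw
    have hd : ∀ z ∈ Icc x y, HasDerivWithinAt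
        (fun z => (f y - f x) * g z - (g y - g x) * f z)
        ((f y - f x) * g' z - (g y - g x) * f' z) (Icc x y) z := fun z hz =>
      (((hgd z (hsub hz)).const_mul _).sub ((hfd z (hsub hz)).const_mul _)).mono hsub
    have h1 := deriv_nonpos_of_max_left hlt (hd x (left_mem_Icc.2 hxy)) hchord
    have h2 := deriv_nonneg_of_max_right hlt (hd y (right_mem_Icc.2 hxy))
      (fun w hw => (hchord w hw).trans_eq (by ring))
    have hΔ : 0 < f y - f x := sub_pos.2 (hf hx hy hlt)
    have hΔg : 0 < g y - g x := sub_pos.2 (hg hx hy hlt)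
    -- Both ratios are compared with the slope of the chord from `x` to `y`.
    have h3 : f' y / g' y ≤ (f y - f x) / (g y - g x) := by
      rw [div_le_div_iff₀ (hg' y hy) hΔg]; linarith
    have h4 : (f y - f x) / (g y - g x) ≤ f' x / g' x := by
      rw [div_le_div_iff₀ hΔg (hg' x hx)]; linarith
    exact h3.trans h4
  · intro hanti n hn a ha
    obtain ⟨h1, h2⟩ := qam_spec hI hfc hn a ha
    obtain ⟨h3, h4⟩ := qam_spec hI hgc hn a ha
    set m := qam I f a
    have hn0 : (0 : ℝ) < n := by exact_mod_cast hn
    have hc : 0 < f' m / g' m := div_pos (hf' m h1) (hg' m h1)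
    have hsum := Finset.sum_le_sum fun i (_ : i ∈ Finset.univ) =>
      sub_ratio_mul_le hI hfd hgd hg' hanti h1 (ha i)
    rw [Finset.sum_sub_distrib, ← Finset.mul_sum] at hsum
    simp only [Finset.sum_const, Finset.card_univ, Fintype.card_fin, nsmul_eq_mul] at hsum
    rw [eq_div_iff hn0.ne'] at h2 h4
    rw [← h2, ← h4] at hsum
    by_contra hcon
    have hlt := hg h3 h1 (not_le.1 hcon)
    have := mul_lt_mul_of_pos_left hlt (mul_pos hn0 hc)
    linarith

/-- for differentiable `f, g` with nonvanishing derivatives and of the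
same monotonicity, `A^[f] ≤ A^[g]` iff `f'/g'` is non-increasing on `I`. -/
theorem qam_le_iff_deriv_ratio_antitone_same_monotonicity
    (I : Set ℝ) (hI : I.OrdConnected) (hInontriv : ∃ x ∈ I, ∃ y ∈ I, x < y)
    (f g f' g' : ℝ → ℝ)
    (hfd : ∀ x ∈ I, HasDerivWithinAt f (f' x) I x)
    (hgd : ∀ x ∈ I, HasDerivWithinAt g (g' x) I x)
    (hf'0 : ∀ x ∈ I, f' x ≠ 0) (hg'0 : ∀ x ∈ I, g' x ≠ 0)
    (hsame : (StrictMonoOn f I ∧ StrictMonoOn g I) ∨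
             (StrictAntiOn f I ∧ StrictAntiOn g I)) :
    qamLE I f g ↔ AntitoneOn (fun x => f' x / g' x) I := by
  rcases hsame with ⟨hf, hg⟩ | ⟨hf, hg⟩
  · exact qamLE_iff_of_strictMonoOn hI hInontriv hfd hgd hf'0 hg'0 hf hg
  · have hfc : ContinuousOn f I := fun x hx => (hfd x hx).continuousWithinAt
    have hgc : ContinuousOn g I := fun x hx => (hgd x hx).continuousWithinAt
    have h := qamLE_iff_of_strictMonoOn hI hInontriv
      (f := fun x => -f x) (g := fun x => -g x) (f' := fun x => -f' x) (g' := fun x => -g' x)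
      (fun x hx => (hfd x hx).neg) (fun x hx => (hgd x hx).neg)
      (fun x hx => neg_ne_zero.2 (hf'0 x hx)) (fun x hx => neg_ne_zero.2 (hg'0 x hx))
      (fun x hx y hy hxy => neg_lt_neg (hf hx hy hxy))
      (fun x hx y hy hxy => neg_lt_neg (hg hx hy hxy))
    simp only [neg_div_neg_eq] at h
    rw [← h]
    refine forall_congr' fun n => forall_congr' fun hn => forall_congr' fun a =>
      forall_congr' fun ha => ?_
    rw [qam_neg hI hfc hf.injOn hn a ha, qam_neg hI hgc hg.injOn hn a ha]
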